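/- Assume V ∈ C¹(ℝ^N), c ∈ ℝ, condition (V^c) and the coercivity condition (1.7). If q ∈ ℳ_c, then (i) dist(q(t), 𝒱^c₋) → 0 as t → α_q from the right (as t → −∞ if α_q = −∞), and if α_q > −∞ then V(q(α_q)) = c and q(α_q) ∈ 𝒱^c₋; (ii) dist(q(t), 𝒱^c₊) → 0 as t → ω_q from the left (as t → +∞ if ω_q = +∞), and if ω_q < +∞ then V(q(ω_q)) = c and q(ω_q) ∈ 𝒱^c₊. -/

import Mathlib

open MeasureTheory Filter Metric Set Topology
open scoped ENNReal

noncomputable section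

abbrev Euc (N : ℕ) := EuclideanSpace ℝ (Fin N)

def setDist {E : Type*} [PseudoMetricSpace E] (A B : Set E) : ℝ :=
  sInf ((fun p : E × E => dist p.1 p.2) '' (A ×ˢ B))

def IsH1loc {N : ℕ} (q q' : ℝ → Euc N) : Prop :=
  LocallyIntegrable q' volume ∧
  (∀ a b : ℝ, IntegrableOn (fun t => ‖q' t‖ ^ 2) (Icc a b) volume) ∧
  (∀ a b : ℝ, q b - q a = ∫ t in a..b, q' t)

def lagJ {N : ℕ} (V : Euc N → ℝ) (c : ℝ) (q q' : ℝ → Euc N) (I : Set ℝ) : ℝ≥0∞ :=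
  ∫⁻ t in I, ENNReal.ofReal (2⁻¹ * ‖q' t‖ ^ 2 + (V (q t) - c))

def Gamma {N : ℕ} (V : Euc N → ℝ) (c : ℝ) (Vm Vp : Set (Euc N)) :
    Set ((ℝ → Euc N) × (ℝ → Euc N)) :=
  {p | IsH1loc p.1 p.2 ∧ (∀ t, c ≤ V (p.1 t)) ∧
    (∀ ε > 0, ∃ᶠ t in atBot, infDist (p.1 t) Vm < ε) ∧
    (∀ ε > 0, ∃ᶠ t in atTop, infDist (p.1 t) Vp < ε)}

def mc {N : ℕ} (V : Euc N → ℝ) (c : ℝ) (Vm Vp : Set (Euc N)) : ℝ≥0∞ :=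
  ⨅ (p) (_ : p ∈ Gamma V c Vm Vp), lagJ V c p.1 p.2 univ

def Coercive {N : ℕ} (V : Euc N → ℝ) (c : ℝ) (Vm Vp : Set (Euc N)) (R : ℝ) : Prop :=
  mc V c Vm Vp =
    ⨅ (p) (_ : p ∈ Gamma V c Vm Vp) (_ : ∀ t, ‖p.1 t‖ ≤ R), lagJ V c p.1 p.2 univ

/-- `ρ₀ := (1/4)·dist(𝒱⁻ ∩ B̄_R(0), 𝒱⁺ ∩ B̄_R(0))`. -/
def rho0 {N : ℕ} (Vm Vp : Set (Euc N)) (R : ℝ) : ℝ :=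
  (1 / 4) * setDist (Vm ∩ closedBall 0 R) (Vp ∩ closedBall 0 R)

/-- membership in `ℳ_c`. -/
def MemM {N : ℕ} (V : Euc N → ℝ) (c : ℝ) (Vm Vp : Set (Euc N)) (R : ℝ)
    (q q' : ℝ → Euc N) : Prop :=
  (q, q') ∈ Gamma V c Vm Vp ∧
  infDist (q 0) {x | V x ≤ c} = rho0 Vm Vp R ∧
  lagJ V c q q' univ = mc V c Vm Vp ∧
  (∀ t, ‖q t‖ ≤ R)

/-- `α_q` (valued in `[-∞,+∞]`, with `−∞` when `q(ℝ) ∩ 𝒱⁻ = ∅`). -/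
def alphaQ {N : ℕ} (Vm : Set (Euc N)) (q : ℝ → Euc N) : EReal :=
  sSup {x : EReal | ∃ t : ℝ, x = (t : EReal) ∧ q t ∈ Vm}

/-- `ω_q` (valued in `[-∞,+∞]`, with `+∞` when there is no `t > α_q` with `q(t) ∈ 𝒱⁺`). -/
def omegaQ {N : ℕ} (Vm Vp : Set (Euc N)) (q : ℝ → Euc N) : EReal :=
  sInf {x : EReal | ∃ t : ℝ, x = (t : EReal) ∧ alphaQ Vm q < (t : EReal) ∧ q t ∈ Vp}

/-- reflection of `q` with respect to `b` (used for `t > b`). -/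
def reflPlus {N : ℕ} (q : ℝ → Euc N) (b : ℝ) : ℝ → Euc N :=
  fun t => if t ≤ b then q t else q (2 * b - t)

/-- reflection of `q` with respect to `a` (used for `t < a`). -/
def reflMinus {N : ℕ} (q : ℝ → Euc N) (a : ℝ) : ℝ → Euc N :=
  fun t => if a ≤ t then q t else q (2 * a - t)

/-- ω-limit set `Ω_q := ⋂_{t > α_q} closure {q(s) : s ≥ t}`. -/
def omegaLimitSet {N : ℕ} (Vm : Set (Euc N)) (q : ℝ → Euc N) : Set (Euc N) :=
  ⋂ (t : ℝ) (_ : alphaQ Vm q < (t : EReal)), closure (q '' Ici t)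

/-- α-limit set `𝒜_q := ⋂_{t < ω_q} closure {q(s) : s ≤ t}`. -/
def alphaLimitSet {N : ℕ} (Vm Vp : Set (Euc N)) (q : ℝ → Euc N) : Set (Euc N) :=
  ⋂ (t : ℝ) (_ : (t : EReal) < omegaQ Vm Vp q), closure (q '' Iic t)

/-!
A bounded curve of finite action whose distance to one component of the sublevel set is small at
arbitrarily late times stays close to that component. Otherwise it would cross, infinitely often,
a fixed shell around the component on which `V - c` is bounded below, and by AM-GM,
`½ |q'|² + (V - c) ≥ √(2 (V - c)) |q'|`, each crossing costs a fixed amount of action. A minimizer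
has finite action because `m_c` is finite: a connection can be cut off where it is close to either
component and completed by segments to nearest points, along which `V ≥ c`. At a finite endpoint
everything follows from continuity.
-/

section Separation

variable {E : Type*} [PseudoMetricSpace E] {A B : Set E} {x y : E}

lemma setDist_comm (A B : Set E) : setDist A B = setDist B A := by
  rw [setDist, setDist, ← image_swap_prod, image_image]
  simp only [Prod.fst_swap, Prod.snd_swap, dist_comm]

lemma setDist_le_dist (hx : x ∈ A) (hy : y ∈ B) : setDist A B ≤ dist x y :=
  csInf_le ⟨0, forall_mem_image.2 fun _ _ => dist_nonneg⟩ (mem_image_of_mem _ (mk_mem_prod hx hy))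

lemma setDist_le_infDist (hB : B.Nonempty) (hx : x ∈ A) : setDist A B ≤ infDist x B :=
  (le_infDist hB).2 fun _ hy => setDist_le_dist hx hy

lemma nonempty_prod_of_setDist_pos (h : 0 < setDist A B) : (A ×ˢ B).Nonempty := by
  by_contra hempty
  simp [setDist, not_nonempty_iff_eq_empty.1 hempty] at h

lemma nonempty_left_of_setDist_pos (h : 0 < setDist A B) : A.Nonempty :=
  (nonempty_prod_of_setDist_pos h).fst

lemma nonempty_right_of_setDist_pos (h : 0 < setDist A B) : B.Nonempty :=
  (nonempty_prod_of_setDist_pos h).snd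

lemma mem_left_of_dist_eq_infDist_union (hx : x ∈ A ∪ B) (hxy : dist y x = infDist y (A ∪ B))
    (hA : A.Nonempty) (hy : infDist y A < setDist A B / 2) : x ∈ A := by
  refine hx.resolve_right fun hxB => ?_
  obtain ⟨a, ha, hya⟩ := (infDist_lt_iff hA).1 hy
  have hxa : dist y x ≤ dist y a := hxy ▸ infDist_le_dist_of_mem (Or.inl ha)
  linarith [setDist_le_dist ha hxB, dist_triangle_left a x y]

lemma lt_of_infDist_mem_Ioo {V : E → ℝ} {c : ℝ} (hsplit : {x | V x ≤ c} = A ∪ B)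
    (hB : B.Nonempty) (hx : infDist x B ∈ Ioo 0 (setDist A B)) : c < V x := by
  by_contra! hVx
  rcases (hsplit ▸ hVx : x ∈ A ∪ B) with hxA | hxB
  · exact (setDist_le_infDist hB hxA).not_gt hx.2
  · exact hx.1.ne' (infDist_zero_of_mem hxB)

end Separation

section NearestPoint

variable {E : Type*} [NormedAddCommGroup E] [NormedSpace ℝ E]

lemma eq_of_mem_segment_of_dist_le {x y z : E} (hy : y ∈ segment ℝ x z)
    (hle : dist z x ≤ dist z y) : y = x := by
  rw [dist_comm z x, dist_comm z y] at hle
  exact (dist_le_zero.1 (by linarith [dist_add_dist_of_mem_segment hy])).symm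

lemma le_of_mem_segment_of_dist_eq_infDist {V : E → ℝ} (hV : Continuous V) {c : ℝ} {x z w : E}
    (hz : c ≤ V z) (hxz : dist z x = infDist z {y | V y ≤ c}) (hw : w ∈ segment ℝ x z) :
    c ≤ V w := by
  have hopen : openSegment ℝ x z ⊆ {y | c ≤ V y} := by
    intro y hy
    by_contra hVc
    have hVy : V y < c := not_le.1 hVc
    have hle : dist z x ≤ dist z y := hxz ▸ infDist_le_dist_of_mem hVy.le
    obtain rfl : y = x :=
      eq_of_mem_segment_of_dist_le (openSegment_subset_segment ℝ x z hy) hle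
    exact hVy.not_ge (left_mem_openSegment_iff.1 hy ▸ hz)
  exact closure_minimal hopen (isClosed_le continuous_const hV)
    (segment_subset_closure_openSegment hw)

lemma exists_segment_subset_superlevel [ProperSpace E] {V : E → ℝ} (hV : Continuous V) {c : ℝ}
    {A B : Set E} (hsplit : {x | V x ≤ c} = A ∪ B) (hsep : 0 < setDist A B) {z : E}
    (hz : c ≤ V z) (hzA : infDist z A < setDist A B / 2) :
    ∃ x ∈ A, V x = c ∧ segment ℝ x z ⊆ {y | c ≤ V y} := by
  have hA := nonempty_left_of_setDist_pos hsep
  obtain ⟨x, hx, hzx⟩ := (isClosed_le hV continuous_const).exists_infDist_eq_dist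
    (hsplit ▸ hA.mono subset_union_left : {x | V x ≤ c}.Nonempty) z
  have hseg : segment ℝ x z ⊆ {y | c ≤ V y} := fun _ hy =>
    le_of_mem_segment_of_dist_eq_infDist hV hz hzx.symm hy
  exact ⟨x, mem_left_of_dist_eq_infDist_union (hsplit ▸ hx) (hsplit ▸ hzx.symm) hA hzA,
    le_antisymm hx (hseg (left_mem_segment ℝ x z)), hseg⟩

end NearestPoint

section Crossing

variable {d : ℝ → ℝ} {s t a b : ℝ}

-- Unordered intervals make the crossing lemmas serve both directions of time.
lemma exists_eq_and_forall_uIcc_le (hd : Continuous d) (hs : d s ≤ b) (ht : b ≤ d t) :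
    ∃ v ∈ uIcc s t, d v = b ∧ ∀ τ ∈ uIcc s v, d τ ≤ b := by
  have hivt {r : ℝ} (hr : b ≤ d r) : ∃ σ ∈ uIcc s r, d σ = b :=
    intermediate_value_uIcc hd.continuousOn (Icc_subset_uIcc ⟨hs, hr⟩)
  have hcompact : IsCompact (uIcc s t ∩ d ⁻¹' {b}) :=
    isCompact_uIcc.inter_right (isClosed_singleton.preimage hd)
  obtain ⟨v, ⟨hv, hdv⟩, hmin⟩ := hcompact.exists_isMinOn (hivt ht)
    (continuous_const.dist continuous_id : Continuous fun τ => dist s τ).continuousOn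
  refine ⟨v, hv, hdv, fun τ hτ => ?_⟩
  by_contra! hbτ
  obtain ⟨σ, hσ, hdσ⟩ := hivt hbτ.le
  have hvσ : dist s v ≤ dist s σ :=
    hmin ⟨uIcc_subset_uIcc_left (uIcc_subset_uIcc_left hv hτ) hσ, hdσ⟩
  obtain rfl : σ = τ := eq_of_mem_segment_of_dist_le (by rwa [segment_symm, segment_eq_uIcc])
    ((Real.dist_left_le_of_mem_uIcc hτ).trans hvσ)
  exact hbτ.ne' hdσ

lemma exists_uIcc_subset_preimage_Icc (hd : Continuous d) (hab : a ≤ b) (hs : d s ≤ a)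
    (ht : b ≤ d t) :
    ∃ u v, uIcc u v ⊆ uIcc s t ∩ d ⁻¹' Icc a b ∧ d u = a ∧ d v = b := by
  obtain ⟨v, hv, hdv, hvle⟩ := exists_eq_and_forall_uIcc_le hd (hs.trans hab) ht
  -- Running back from `v`, the level `a` is first reached where `-d` first reaches `-a`.
  obtain ⟨u, hu, hdu, hule⟩ := exists_eq_and_forall_uIcc_le hd.neg
    (s := v) (t := s) (b := -a) (by simpa [hdv] using hab) (neg_le_neg hs)
  have huv : uIcc u v ⊆ uIcc s v := uIcc_subset_uIcc (uIcc_comm s v ▸ hu) right_mem_uIcc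
  refine ⟨u, v, fun τ hτ => ⟨uIcc_subset_uIcc_left hv (huv hτ), ?_, hvle τ (huv hτ)⟩,
    neg_injective hdu, hdv⟩
  exact neg_le_neg_iff.1 (hule τ (uIcc_comm u v ▸ hτ))

end Crossing

section Endpoint

variable {T : Set ℝ} {a : ℝ}

lemma mem_closure_of_sSup_coe_eq (h : sSup ((↑) '' T : Set EReal) = a) : a ∈ closure T := by
  have hT : ((↑) '' T : Set EReal).Nonempty := by
    by_contra hempty
    simp [not_nonempty_iff_eq_empty.1 hempty] at h
  rw [EReal.isEmbedding_coe.closure_eq_preimage_closure_image, mem_preimage, ← h]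
  exact sSup_mem_closure hT

lemma mem_closure_of_sInf_coe_eq (h : sInf ((↑) '' T : Set EReal) = a) : a ∈ closure T := by
  have hT : ((↑) '' T : Set EReal).Nonempty := by
    by_contra hempty
    simp [not_nonempty_iff_eq_empty.1 hempty] at h
  rw [EReal.isEmbedding_coe.closure_eq_preimage_closure_image, mem_preimage, ← h]
  exact sInf_mem_closure hT

lemma tendsto_infDist_nhdsWithin_zero {E : Type*} [PseudoMetricSpace E] {q : ℝ → E} {S : Set E}
    (hq : Continuous q) (ha : q a ∈ S) :
    Tendsto (fun t => infDist (q t) S) (𝓝[T] a) (𝓝 0) := by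
  rw [← infDist_zero_of_mem ha]
  exact ((continuous_infDist_pt S).comp hq).continuousWithinAt

variable {N : ℕ} {Vm Vp : Set (Euc N)} {p : ℝ → Euc N}

lemma alphaQ_eq_sSup_image (Vm : Set (Euc N)) (p : ℝ → Euc N) :
    alphaQ Vm p = sSup ((↑) '' (p ⁻¹' Vm)) := by
  simp only [alphaQ, image, mem_preimage, eq_comm, and_comm]

lemma omegaQ_eq_sInf_image (Vm Vp : Set (Euc N)) (p : ℝ → Euc N) :
    omegaQ Vm Vp p = sInf ((↑) '' {t : ℝ | alphaQ Vm p < t ∧ p t ∈ Vp}) := by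
  simp only [omegaQ, image, mem_ofPred_eq, eq_comm, and_comm]

lemma mem_of_alphaQ_eq_coe (hVm : IsClosed Vm) (hp : Continuous p) (h : alphaQ Vm p = a) :
    p a ∈ Vm :=
  closure_minimal Subset.rfl (hVm.preimage hp)
    (mem_closure_of_sSup_coe_eq (alphaQ_eq_sSup_image Vm p ▸ h))

lemma mem_of_omegaQ_eq_coe (hVp : IsClosed Vp) (hp : Continuous p)
    (h : omegaQ Vm Vp p = a) : p a ∈ Vp :=
  closure_minimal (fun _ ht => ht.2) (hVp.preimage hp)
    (mem_closure_of_sInf_coe_eq (omegaQ_eq_sInf_image Vm Vp p ▸ h))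

end Endpoint

namespace IsH1loc

variable {N : ℕ} {q q' p p' : ℝ → Euc N}

lemma intervalIntegrable (h : IsH1loc q q') (a b : ℝ) : IntervalIntegrable q' volume a b :=
  (h.1.integrableOn_isCompact isCompact_uIcc).intervalIntegrable

lemma continuous (h : IsH1loc q q') : Continuous q := by
  have hq : q = fun b => q 0 + ∫ t in (0 : ℝ)..b, q' t := by
    funext b
    rw [← h.2.2 0 b, add_sub_cancel]
  rw [hq]
  exact continuous_const.add (intervalIntegral.continuous_primitive h.intervalIntegrable 0)

lemma const (x : Euc N) : IsH1loc (fun _ => x) 0 :=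
  ⟨locallyIntegrable_zero, fun a b => by simp, fun a b => by simp⟩

lemma lineMap (x y : Euc N) (s : ℝ) :
    IsH1loc (fun t => AffineMap.lineMap x y (t - s)) (fun _ => y - x) := by
  refine ⟨locallyIntegrable_const _, fun a b => integrableOn_const (by simp), fun a b => ?_⟩
  simp only [AffineMap.lineMap_apply_module', intervalIntegral.integral_const]
  module

lemma integral_piecewise_Iic (hq : IsH1loc q q') (hp : IsH1loc p p') {T : ℝ} (hT : q T = p T)
    (b : ℝ) : ∫ t in T..b, (Iic T).piecewise q' p' t = (Iic T).piecewise q p b - q T := by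
  rcases le_or_gt b T with hb | hb
  · rw [piecewise_eq_of_mem _ _ _ (mem_Iic.2 hb), hq.2.2 T b]
    refine intervalIntegral.integral_congr fun t ht => ?_
    exact piecewise_eq_of_mem _ _ _ (uIcc_of_ge hb ▸ ht).2
  · rw [piecewise_eq_of_notMem _ _ _ (notMem_Iic.2 hb), hT, hp.2.2 T b]
    refine intervalIntegral.integral_congr_uIoo fun t ht => ?_
    have hTt : t ∈ Ioo T b := by rwa [uIoo_of_lt hb] at ht
    exact piecewise_eq_of_notMem _ _ _ (notMem_Iic.2 hTt.1)

lemma piecewise_Iic (hq : IsH1loc q q') (hp : IsH1loc p p') {T : ℝ} (hT : q T = p T) :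
    IsH1loc ((Iic T).piecewise q p) ((Iic T).piecewise q' p') := by
  have hloc : LocallyIntegrable ((Iic T).piecewise q' p') volume := by
    rw [← indicator_add_compl_eq_piecewise]
    exact (hq.1.indicator measurableSet_Iic).add (hp.1.indicator measurableSet_Iic.compl)
  have hint (a b : ℝ) : IntervalIntegrable ((Iic T).piecewise q' p') volume a b :=
    (hloc.integrableOn_isCompact isCompact_uIcc).intervalIntegrable
  refine ⟨hloc, fun a b => ?_, fun a b => ?_⟩
  · have hsq : (fun t => ‖(Iic T).piecewise q' p' t‖ ^ 2) =
        (Iic T).piecewise (fun t => ‖q' t‖ ^ 2) (fun t => ‖p' t‖ ^ 2) := by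
      funext t
      exact apply_piecewise _ _ _ fun _ v => ‖v‖ ^ 2
    rw [hsq]
    exact Integrable.piecewise measurableSet_Iic (hq.2.1 a b).integrableOn
      (hp.2.1 a b).integrableOn
  · rw [← intervalIntegral.integral_interval_sub_left (hint T b) (hint T a),
      integral_piecewise_Iic hq hp hT, integral_piecewise_Iic hq hp hT, sub_sub_sub_cancel_right]

lemma exists_segment_path (x y : Euc N) (s : ℝ) :
    ∃ γ γ' : ℝ → Euc N, IsH1loc γ γ' ∧ range γ ⊆ segment ℝ x y ∧ (∀ t ≤ s, γ t = x) ∧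
      (∀ t ≥ s + 1, γ t = y) ∧ ∀ t ∉ Icc s (s + 1), γ' t = 0 := by
  have hline_const := (lineMap x y s).piecewise_Iic (const y) (T := s + 1) (by simp)
  have hpath := (const x).piecewise_Iic hline_const (T := s) (by simp)
  refine ⟨_, _, hpath, range_subset_iff.2 fun t => ?_, fun t ht => ?_, fun t ht => ?_,
    fun t ht => ?_⟩
  · simp only [piecewise, mem_Iic]
    split_ifs with hs hs1
    · exact left_mem_segment ℝ x y
    · rw [segment_eq_image_lineMap]
      exact mem_image_of_mem _ ⟨by linarith, by linarith⟩
    · exact right_mem_segment ℝ x y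
  · exact piecewise_eq_of_mem _ _ _ ht
  · rw [piecewise_eq_of_notMem _ _ _ (notMem_Iic.2 (by linarith))]
    rcases ht.eq_or_lt with rfl | ht
    · simp
    · exact piecewise_eq_of_notMem _ _ _ (notMem_Iic.2 ht)
  · simp only [piecewise, mem_Iic]
    split_ifs with hs hs1
    · rfl
    · exact absurd ⟨(not_le.1 hs).le, hs1⟩ ht
    · rfl

lemma exists_extension_by_segments (hq : IsH1loc q q') {a b : ℝ} (hab : a ≤ b) (x y : Euc N) :
    ∃ p p' : ℝ → Euc N, IsH1loc p p' ∧
      range p ⊆ segment ℝ x (q a) ∪ (range q ∪ segment ℝ y (q b)) ∧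
      (∀ t ≤ a - 1, p t = x) ∧ (∀ t ≥ b + 1, p t = y) ∧
      ∀ t ∉ Icc (a - 1) (b + 1), p' t = 0 := by
  obtain ⟨γ, γ', hγ, hγ_seg, hγ_left, hγ_right, hγ'⟩ := exists_segment_path x (q a) (a - 1)
  obtain ⟨σ, σ', hσ, hσ_seg, hσ_left, hσ_right, hσ'⟩ := exists_segment_path (q b) y b
  have hqσ := hq.piecewise_Iic hσ (T := b) (hσ_left b le_rfl).symm
  have hp := hγ.piecewise_Iic hqσ (T := a) (by
    rw [hγ_right a (by simp), piecewise_eq_of_mem _ _ _ (mem_Iic.2 hab)])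
  refine ⟨_, _, hp, ?_, fun t ht => ?_, fun t ht => ?_, fun t ht => ?_⟩
  · refine range_ite_subset.trans (union_subset_union hγ_seg ?_)
    refine range_ite_subset.trans (union_subset_union_right _ ?_)
    rwa [segment_symm]
  · rw [piecewise_eq_of_mem _ _ _ (mem_Iic.2 (by linarith)), hγ_left t ht]
  · rw [piecewise_eq_of_notMem _ _ _ (notMem_Iic.2 (by linarith)),
      piecewise_eq_of_notMem _ _ _ (notMem_Iic.2 (by linarith)), hσ_right t ht]
  · rcases not_and_or.1 ht with ht | ht
    · have hta : t < a - 1 := not_le.1 ht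
      rw [piecewise_eq_of_mem _ _ _ (mem_Iic.2 (by linarith [hta]))]
      exact hγ' t fun h => ht h.1
    · have htb : b + 1 < t := not_le.1 ht
      rw [piecewise_eq_of_notMem _ _ _ (notMem_Iic.2 (by linarith [htb])),
        piecewise_eq_of_notMem _ _ _ (notMem_Iic.2 (by linarith [htb]))]
      exact hσ' t fun h => ht h.2

end IsH1loc

section Action

variable {N : ℕ} {V : Euc N → ℝ} {c : ℝ} {q q' p p' : ℝ → Euc N}

lemma lagJ_mono {I J : Set ℝ} (h : I ⊆ J) : lagJ V c q q' I ≤ lagJ V c q q' J :=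
  lintegral_mono_set h

lemma IsH1loc.lagJ_Icc_lt_top (hV : Continuous V) (hq : IsH1loc q q') (a b : ℝ) :
    lagJ V c q q' (Icc a b) < ⊤ := by
  have hVq : Continuous fun t => V (q t) - c := (hV.comp hq.continuous).sub continuous_const
  exact (((hq.2.1 a b).const_mul 2⁻¹).add hVq.integrableOn_Icc).lintegral_lt_top

lemma lagJ_univ_eq_of_forall_notMem {I : Set ℝ} (hV : ∀ t ∉ I, V (q t) = c)
    (hq' : ∀ t ∉ I, q' t = 0) :
    lagJ V c q q' univ = lagJ V c q q' I := by
  rw [lagJ, lagJ, setLIntegral_univ, setLIntegral_eq_of_support_subset]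
  intro t ht
  by_contra htI
  simp [hV t htI, hq' t htI] at ht

lemma IsH1loc.ofReal_mul_dist_le_lagJ (hq : IsH1loc q q') {k u v : ℝ} (hk : 0 ≤ k)
    (hV : ∀ t ∈ uIcc u v, k ^ 2 / 2 ≤ V (q t) - c) :
    ENNReal.ofReal (k * dist (q u) (q v)) ≤ lagJ V c q q' (uIcc u v) := by
  have hdist : ENNReal.ofReal (dist (q u) (q v)) ≤ ∫⁻ t in uIcc u v, ‖q' t‖ₑ := by
    rw [dist_comm, dist_eq_norm, hq.2.2 u v, intervalIntegral.norm_integral_eq_norm_integral_uIoc,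
      ofReal_norm]
    exact (enorm_integral_le_lintegral_enorm _).trans (lintegral_mono_set uIoc_subset_uIcc)
  calc ENNReal.ofReal (k * dist (q u) (q v))
      ≤ ENNReal.ofReal k * ∫⁻ t in uIcc u v, ‖q' t‖ₑ := by
        rw [ENNReal.ofReal_mul hk]
        gcongr
    _ = ∫⁻ t in uIcc u v, ENNReal.ofReal (k * ‖q' t‖) := by
        simp only [ENNReal.ofReal_mul hk, ofReal_norm,
          lintegral_const_mul' _ _ ENNReal.ofReal_ne_top]
    _ ≤ lagJ V c q q' (uIcc u v) := by
        refine setLIntegral_mono' measurableSet_uIcc fun t ht => ENNReal.ofReal_le_ofReal ?_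
        linarith [hV t ht, two_mul_le_add_sq k ‖q' t‖]

lemma exists_isCompact_lagJ_compl_lt (hJ : lagJ V c q q' univ < ⊤) {η : ℝ≥0∞} (hη : 0 < η) :
    ∃ K, IsCompact K ∧ lagJ V c q q' Kᶜ < η := by
  set μ := volume.withDensity fun t => ENNReal.ofReal (2⁻¹ * ‖q' t‖ ^ 2 + (V (q t) - c))
  have : IsFiniteMeasure μ := isFiniteMeasure_withDensity (by
    rw [← setLIntegral_univ]
    exact hJ.ne)
  obtain ⟨K, -, hK, hμK⟩ := MeasurableSet.univ.exists_isCompact_sdiff_lt (measure_ne_top μ univ)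
    hη.ne'
  refine ⟨K, hK, ?_⟩
  rwa [← compl_eq_univ_sdiff, withDensity_apply _ hK.measurableSet.compl] at hμK

lemma exists_lagJ_Ioi_lt (hJ : lagJ V c q q' univ < ⊤) {η : ℝ≥0∞} (hη : 0 < η) :
    ∃ T, lagJ V c q q' (Ioi T) < η := by
  obtain ⟨K, hK, hlt⟩ := exists_isCompact_lagJ_compl_lt hJ hη
  obtain ⟨T, hT⟩ := hK.bddAbove
  exact ⟨T, (lagJ_mono fun t ht htK => (hT htK).not_gt ht).trans_lt hlt⟩

lemma exists_lagJ_Iio_lt (hJ : lagJ V c q q' univ < ⊤) {η : ℝ≥0∞} (hη : 0 < η) :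
    ∃ T, lagJ V c q q' (Iio T) < η := by
  obtain ⟨K, hK, hlt⟩ := exists_isCompact_lagJ_compl_lt hJ hη
  obtain ⟨T, hT⟩ := hK.bddBelow
  exact ⟨T, (lagJ_mono fun t ht htK => (hT htK).not_gt ht).trans_lt hlt⟩

end Action

section Convergence

variable {N : ℕ} {V : Euc N → ℝ} {c : ℝ} {A B : Set (Euc N)}

lemma exists_lt_le_of_infDist_mem_Icc (hV : Continuous V) (hsplit : {x | V x ≤ c} = A ∪ B)
    (hsep : 0 < setDist A B) {K : Set (Euc N)} (hK : IsCompact K) {a b : ℝ} (ha : 0 < a)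
    (hb : b < setDist A B) : ∃ m > c, ∀ x ∈ K, infDist x B ∈ Icc a b → m ≤ V x := by
  have hshell : IsCompact (K ∩ (infDist · B) ⁻¹' Icc a b) :=
    hK.inter_right (isClosed_Icc.preimage (continuous_infDist_pt B))
  obtain ⟨m, hm, hmV⟩ := hshell.exists_forall_le' hV.continuousOn fun x hx =>
    lt_of_infDist_mem_Ioo hsplit (nonempty_right_of_setDist_pos hsep)
      (Icc_subset_Ioo ha hb hx.2)
  exact ⟨m, hm, fun x hxK hx => hmV x ⟨hxK, hx⟩⟩

lemma exists_pos_le_lagJ_of_infDist_le_of_le_infDist (hV : Continuous V)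
    (hsplit : {x | V x ≤ c} = A ∪ B) (hsep : 0 < setDist A B) {K : Set (Euc N)}
    (hK : IsCompact K) {a b : ℝ} (ha : 0 < a) (hab : a < b) (hb : b < setDist A B) :
    ∃ η > 0, ∀ q q' : ℝ → Euc N, IsH1loc q q' → range q ⊆ K → ∀ s t,
      infDist (q s) B ≤ a → b ≤ infDist (q t) B → η ≤ lagJ V c q q' (uIcc s t) := by
  obtain ⟨m, hm, hmV⟩ := exists_lt_le_of_infDist_mem_Icc hV hsplit hsep hK ha hb
  set k := √(2 * (m - c)) with hk
  have hkpos : 0 < k := Real.sqrt_pos.2 (by linarith)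
  refine ⟨ENNReal.ofReal (k * (b - a)), ENNReal.ofReal_pos.2 (mul_pos hkpos (sub_pos.2 hab)),
    fun q q' hq hqK s t hs ht => ?_⟩
  obtain ⟨u, v, huv, hu, hv⟩ := exists_uIcc_subset_preimage_Icc
    ((continuous_infDist_pt B).comp hq.continuous) hab.le hs ht
  have hdist : b - a ≤ dist (q u) (q v) := by
    have h := infDist_le_infDist_add_dist (s := B) (x := q v) (y := q u)
    rw [dist_comm] at h
    simp only [Function.comp_apply] at hu hv
    linarith
  calc ENNReal.ofReal (k * (b - a))
      ≤ ENNReal.ofReal (k * dist (q u) (q v)) := by gcongr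
    _ ≤ lagJ V c q q' (uIcc u v) := hq.ofReal_mul_dist_le_lagJ hkpos.le fun τ hτ => by
        rw [hk, Real.sq_sqrt (by linarith)]
        linarith [hmV (q τ) (hqK (mem_range_self τ)) (huv hτ).2]
    _ ≤ lagJ V c q q' (uIcc s t) := lagJ_mono fun τ hτ => (huv hτ).1

variable {q q' : ℝ → Euc N}

lemma tendsto_infDist_zero_of_frequently_lt (hV : Continuous V)
    (hsplit : {x | V x ≤ c} = A ∪ B) (hsep : 0 < setDist A B) (hq : IsH1loc q q')
    (hbdd : Bornology.IsBounded (range q)) {l : Filter ℝ}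
    (hl : ∀ η > 0, ∃ I ∈ l, I.OrdConnected ∧ lagJ V c q q' I < η)
    (hB : ∀ ε > 0, ∃ᶠ t in l, infDist (q t) B < ε) :
    Tendsto (fun t => infDist (q t) B) l (𝓝 0) := by
  refine tendsto_order.2 ⟨fun ε hε => .of_forall fun t => hε.trans_le infDist_nonneg,
    fun ε hε => ?_⟩
  obtain ⟨b, hb, hbε⟩ := exists_between (lt_min hε hsep)
  obtain ⟨a, ha, hab⟩ := exists_between hb
  obtain ⟨η, hη, hcost⟩ := exists_pos_le_lagJ_of_infDist_le_of_le_infDist hV hsplit hsep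
    hbdd.isCompact_closure ha hab (hbε.trans_le (min_le_right _ _))
  obtain ⟨I, hI, hconn, hIη⟩ := hl η hη
  obtain ⟨s, hs, hsI⟩ := ((hB a ha).and_eventually hI).exists
  filter_upwards [hI] with t ht
  by_contra! hεt
  have hη_le : η ≤ lagJ V c q q' (uIcc s t) := hcost q q' hq subset_closure s t hs.le
    ((hbε.trans_le (min_le_left _ _)).le.trans hεt)
  exact (hη_le.trans (lagJ_mono (hconn.uIcc_subset hsI ht))).not_gt hIη

lemma tendsto_infDist_atTop_zero (hV : Continuous V) (hsplit : {x | V x ≤ c} = A ∪ B)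
    (hsep : 0 < setDist A B) (hq : IsH1loc q q') (hbdd : Bornology.IsBounded (range q))
    (hJ : lagJ V c q q' univ < ⊤) (hB : ∀ ε > 0, ∃ᶠ t in atTop, infDist (q t) B < ε) :
    Tendsto (fun t => infDist (q t) B) atTop (𝓝 0) :=
  tendsto_infDist_zero_of_frequently_lt hV hsplit hsep hq hbdd (fun _ hη =>
    let ⟨T, hT⟩ := exists_lagJ_Ioi_lt hJ hη
    ⟨Ioi T, Ioi_mem_atTop T, ordConnected_Ioi, hT⟩) hB

lemma tendsto_infDist_atBot_zero (hV : Continuous V) (hsplit : {x | V x ≤ c} = A ∪ B)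
    (hsep : 0 < setDist A B) (hq : IsH1loc q q') (hbdd : Bornology.IsBounded (range q))
    (hJ : lagJ V c q q' univ < ⊤) (hA : ∀ ε > 0, ∃ᶠ t in atBot, infDist (q t) A < ε) :
    Tendsto (fun t => infDist (q t) A) atBot (𝓝 0) :=
  tendsto_infDist_zero_of_frequently_lt hV (hsplit.trans (union_comm A B))
    (setDist_comm A B ▸ hsep) hq hbdd (fun _ hη =>
    let ⟨T, hT⟩ := exists_lagJ_Iio_lt hJ hη
    ⟨Iio T, Iio_mem_atBot T, ordConnected_Iio, hT⟩) hA

end Convergence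

section FiniteAction

variable {N : ℕ} {V : Euc N → ℝ} {c : ℝ} {A B : Set (Euc N)} {q q' : ℝ → Euc N}

lemma mem_Gamma_of_eventually_mem (hq : IsH1loc q q') (hV : ∀ t, c ≤ V (q t))
    (hA : ∀ᶠ t in atBot, q t ∈ A) (hB : ∀ᶠ t in atTop, q t ∈ B) : (q, q') ∈ Gamma V c A B :=
  ⟨hq, hV,
    fun _ hε => (hA.mono fun _ ht => (infDist_zero_of_mem ht).trans_lt hε).frequently,
    fun _ hε => (hB.mono fun _ ht => (infDist_zero_of_mem ht).trans_lt hε).frequently⟩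

lemma mc_lt_top (hV : Continuous V) (hsplit : {x | V x ≤ c} = A ∪ B) (hsep : 0 < setDist A B)
    (hq : (q, q') ∈ Gamma V c A B) : mc V c A B < ⊤ := by
  obtain ⟨hH1, hVq, hA, hB⟩ := hq
  obtain ⟨a, -, ha⟩ := frequently_atBot.1 (hA _ (half_pos hsep)) 0
  obtain ⟨b, hab, hb⟩ := frequently_atTop.1 (hB _ (half_pos hsep)) a
  obtain ⟨x, hxA, hxc, hxseg⟩ := exists_segment_subset_superlevel hV hsplit hsep (hVq a) ha
  obtain ⟨y, hyB, hyc, hyseg⟩ := exists_segment_subset_superlevel hV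
    (hsplit.trans (union_comm A B)) (setDist_comm A B ▸ hsep) (hVq b) (setDist_comm A B ▸ hb)
  obtain ⟨p, p', hp, hrange, hpx, hpy, hp'⟩ := hH1.exists_extension_by_segments hab x y
  have hVp (t : ℝ) : c ≤ V (p t) :=
    union_subset hxseg (union_subset (range_subset_iff.2 hVq) hyseg) (hrange (mem_range_self t))
  have hpΓ : (p, p') ∈ Gamma V c A B := mem_Gamma_of_eventually_mem hp hVp
    ((eventually_le_atBot (a - 1)).mono fun t ht => hpx t ht ▸ hxA)
    ((eventually_ge_atTop (b + 1)).mono fun t ht => hpy t ht ▸ hyB)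
  have hVp_eq : ∀ t ∉ Icc (a - 1) (b + 1), V (p t) = c := by
    intro t ht
    rcases not_and_or.1 ht with hta | htb
    · rw [hpx t (not_le.1 hta).le, hxc]
    · rw [hpy t (not_le.1 htb).le, hyc]
  calc mc V c A B ≤ lagJ V c p p' univ := iInf₂_le (p, p') hpΓ
    _ = lagJ V c p p' (Icc (a - 1) (b + 1)) := lagJ_univ_eq_of_forall_notMem hVp_eq hp'
    _ < ⊤ := hp.lagJ_Icc_lt_top hV _ _

end FiniteAction

theorem minimizer_boundary_behaviour_general {N : ℕ} (V : Euc N → ℝ) (hV : Continuous V)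
    (c : ℝ) (Vm Vp : Set (Euc N)) (hVm : IsClosed Vm) (hVp : IsClosed Vp)
    (hsplit : {x | V x ≤ c} = Vm ∪ Vp) (hsep : 0 < setDist Vm Vp)
    (q q' : ℝ → Euc N) (hq : (q, q') ∈ Gamma V c Vm Vp)
    (hbdd : Bornology.IsBounded (range q)) (hJ : lagJ V c q q' univ < ⊤) :
    ((alphaQ Vm q = ⊥ → Tendsto (fun t => infDist (q t) Vm) atBot (𝓝 0)) ∧
     (∀ a : ℝ, alphaQ Vm q = (a : EReal) →
        Tendsto (fun t => infDist (q t) Vm) (𝓝[>] a) (𝓝 0) ∧ V (q a) = c ∧ q a ∈ Vm)) ∧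
    ((omegaQ Vm Vp q = ⊤ → Tendsto (fun t => infDist (q t) Vp) atTop (𝓝 0)) ∧
     (∀ b : ℝ, omegaQ Vm Vp q = (b : EReal) →
        Tendsto (fun t => infDist (q t) Vp) (𝓝[<] b) (𝓝 0) ∧ V (q b) = c ∧ q b ∈ Vp)) := by
  obtain ⟨hH1, hVq, hm, hp⟩ := hq
  have hcont := hH1.continuous
  have hVle : Vm ∪ Vp ⊆ {x | V x ≤ c} := hsplit.ge
  refine ⟨⟨fun _ => tendsto_infDist_atBot_zero hV hsplit hsep hH1 hbdd hJ hm, fun a ha => ?_⟩,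
    fun _ => tendsto_infDist_atTop_zero hV hsplit hsep hH1 hbdd hJ hp, fun b hb => ?_⟩
  · have hqa : q a ∈ Vm := mem_of_alphaQ_eq_coe hVm hcont ha
    exact ⟨tendsto_infDist_nhdsWithin_zero hcont hqa, (hVle (Or.inl hqa)).antisymm (hVq a), hqa⟩
  · have hqb : q b ∈ Vp := mem_of_omegaQ_eq_coe hVp hcont hb
    exact ⟨tendsto_infDist_nhdsWithin_zero hcont hqb, (hVle (Or.inr hqb)).antisymm (hVq b), hqb⟩

/-- Lemma 2.6: behaviour of a minimizer at the endpoints of its connecting time interval. -/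
theorem minimizer_boundary_behaviour {N : ℕ} (hN : 0 < N) (V : Euc N → ℝ) (hV : ContDiff ℝ 1 V)
    (c : ℝ) (Vm Vp : Set (Euc N)) (hVm : IsClosed Vm) (hVp : IsClosed Vp)
    (hsplit : {x | V x ≤ c} = Vm ∪ Vp) (hsep : 0 < setDist Vm Vp)
    (R : ℝ) (hR : 0 < R) (hcoer : Coercive V c Vm Vp R)
    (q q' : ℝ → Euc N) (hq : MemM V c Vm Vp R q q') :
    ((alphaQ Vm q = ⊥ → Tendsto (fun t => infDist (q t) Vm) atBot (𝓝 0)) ∧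
     (∀ a : ℝ, alphaQ Vm q = (a : EReal) →
        Tendsto (fun t => infDist (q t) Vm) (𝓝[>] a) (𝓝 0) ∧ V (q a) = c ∧ q a ∈ Vm)) ∧
    ((omegaQ Vm Vp q = ⊤ → Tendsto (fun t => infDist (q t) Vp) atTop (𝓝 0)) ∧
     (∀ b : ℝ, omegaQ Vm Vp q = (b : EReal) →
        Tendsto (fun t => infDist (q t) Vp) (𝓝[<] b) (𝓝 0) ∧ V (q b) = c ∧ q b ∈ Vp)) := by
  exact minimizer_boundary_behaviour_general V hV.continuous c Vm Vp hVm hVp hsplit hsep q q' hq.1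
    (isBounded_iff_forall_norm_le.2 ⟨R, forall_mem_range.2 hq.2.2.2⟩)
    (hq.2.2.1.trans_lt (mc_lt_top hV.continuous hsplit hsep hq.1))
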